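/- arXiv:2407.17103 — 4 statements merged into one kernel-verified Lean document; each statement's English description precedes it below -/
import Mathlib

section
/- Let m, m', n, n' be positive integers, let Φ be any linear map from n×n to m×m complex matrices, and let Ψ_K(ρ) = ∑_a K_a ρ K_a† with K_a ∈ ℂ^{m'×m} and Ψ_L(ρ) = ∑_b L_b ρ L_b† with L_b ∈ ℂ^{n×n'} be completely positive maps given by these Kraus operators. Then C(Ψ_K ∘ Φ ∘ Ψ_L) = ∑_{a,b} (L_bᵀ ⊗ K_a) C(Φ) (L_bᵀ ⊗ K_a)†. -/
open Matrix Kronecker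
open scoped ComplexOrder

noncomputable section

/-- The linear map `ρ ↦ A ρ Bᴴ`. -/
def sandwich₂ {m n : ℕ} (A B : Matrix (Fin m) (Fin n) ℂ) :
    Matrix (Fin n) (Fin n) ℂ →ₗ[ℂ] Matrix (Fin m) (Fin m) ℂ where
  toFun ρ := A * ρ * Bᴴ
  map_add' X Y := by simp [Matrix.mul_add, Matrix.add_mul]
  map_smul' c X := by simp [Matrix.mul_smul, Matrix.smul_mul]

/-- The linear map `ρ ↦ A ρ Aᴴ`. -/
def sandwich {m n : ℕ} (A : Matrix (Fin m) (Fin n) ℂ) :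
    Matrix (Fin n) (Fin n) ℂ →ₗ[ℂ] Matrix (Fin m) (Fin m) ℂ :=
  sandwich₂ A A

/-- The Choi matrix `C(Φ) = ∑ⱼₖ Eⱼₖ ⊗ Φ(Eⱼₖ)`. -/
def Choi {n m : ℕ} (Φ : Matrix (Fin n) (Fin n) ℂ →ₗ[ℂ] Matrix (Fin m) (Fin m) ℂ) :
    Matrix (Fin n × Fin m) (Fin n × Fin m) ℂ :=
  ∑ j : Fin n, ∑ k : Fin n,
    (Matrix.single j k (1 : ℂ)) ⊗ₖ Φ (Matrix.single j k (1 : ℂ))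

/-- Vectorization: `vec X = ∑ⱼ eⱼ ⊗ X eⱼ`, i.e. `(vec X) (j, i) = X i j`. -/
def vec {m n : ℕ} (X : Matrix (Fin m) (Fin n) ℂ) : Fin n × Fin m → ℂ :=
  fun p => X p.2 p.1

/-- Complete positivity (via the Choi characterization). -/
def IsCP {n : ℕ} (Φ : Matrix (Fin n) (Fin n) ℂ →ₗ[ℂ] Matrix (Fin n) (Fin n) ℂ) : Prop :=
  (Choi Φ).PosSemidef

/-- Trace preservation. -/
def IsTP {n : ℕ} (Φ : Matrix (Fin n) (Fin n) ℂ →ₗ[ℂ] Matrix (Fin n) (Fin n) ℂ) : Prop :=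
  ∀ ρ, (Φ ρ).trace = ρ.trace

/-- Quantum channel: completely positive and trace preserving. -/
def IsChannel {n : ℕ} (Φ : Matrix (Fin n) (Fin n) ℂ →ₗ[ℂ] Matrix (Fin n) (Fin n) ℂ) : Prop :=
  IsCP Φ ∧ IsTP Φ

/-- `K_λ = 1 - (1 - √(1-λ)) x x†`. -/
def Kmat {n : ℕ} (lam : ℝ) (x : Fin n → ℂ) : Matrix (Fin n) (Fin n) ℂ :=
  1 - ((1 - Real.sqrt (1 - lam) : ℝ) : ℂ) • Matrix.vecMulVec x (star x)

/-- `L_λ = √λ y x†`. -/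
def Lmat {n : ℕ} (lam : ℝ) (x y : Fin n → ℂ) : Matrix (Fin n) (Fin n) ℂ :=
  ((Real.sqrt lam : ℝ) : ℂ) • Matrix.vecMulVec y (star x)

/-- The elementary channel `Ψ_{λ,x,y} = K_λ (·) K_λ† + L_λ (·) L_λ†`. -/
def Psi {n : ℕ} (lam : ℝ) (x y : Fin n → ℂ) :
    Matrix (Fin n) (Fin n) ℂ →ₗ[ℂ] Matrix (Fin n) (Fin n) ℂ :=
  sandwich (Kmat lam x) + sandwich (Lmat lam x y)

/-- For `λ ∈ [0,1)` and `⟨x,y⟩ = 0`, the inverse of `Ψ_{λ,x,y}`: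
`Ψ_{λ,x,y}⁻¹ = K_λ⁻¹ (·) K_λ⁻¹ - (1-λ)⁻¹ L_λ (·) L_λ†`. -/
def PsiInv {n : ℕ} (lam : ℝ) (x y : Fin n → ℂ) :
    Matrix (Fin n) (Fin n) ℂ →ₗ[ℂ] Matrix (Fin n) (Fin n) ℂ :=
  sandwich (Kmat lam x)⁻¹ - (((1 - lam)⁻¹ : ℝ) : ℂ) • sandwich (Lmat lam x y)

/-- `Φ` is conjugation by a unitary. -/
def IsUnitaryConj {n : ℕ} (Φ : Matrix (Fin n) (Fin n) ℂ →ₗ[ℂ] Matrix (Fin n) (Fin n) ℂ) : Prop :=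
  ∃ U ∈ Matrix.unitaryGroup (Fin n) ℂ, ∀ ρ, Φ ρ = U * ρ * Uᴴ

/-- A quantum channel is divisible if it factors into two channels neither of which is
a unitary conjugation. -/
def Divisible {n : ℕ} (Φ : Matrix (Fin n) (Fin n) ℂ →ₗ[ℂ] Matrix (Fin n) (Fin n) ℂ) : Prop :=
  ∃ Φ₁ Φ₂ : Matrix (Fin n) (Fin n) ℂ →ₗ[ℂ] Matrix (Fin n) (Fin n) ℂ,
    IsChannel Φ₁ ∧ IsChannel Φ₂ ∧ Φ = Φ₁ ∘ₗ Φ₂ ∧ ¬ IsUnitaryConj Φ₁ ∧ ¬ IsUnitaryConj Φ₂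

/-- `Z = conj(x) conj(x⊥)† ⊗ 1`. -/
def Zmat {n : ℕ} (x xp : Fin n → ℂ) : Matrix (Fin n × Fin n) (Fin n × Fin n) ℂ :=
  (Matrix.vecMulVec (star x) xp) ⊗ₖ (1 : Matrix (Fin n) (Fin n) ℂ)

theorem sandwich_apply {m n : ℕ} (A : Matrix (Fin m) (Fin n) ℂ) (ρ : Matrix (Fin n) (Fin n) ℂ) :
    sandwich A ρ = A * ρ * Aᴴ :=
  rfl

theorem Choi_apply {n m : ℕ} (Φ : Matrix (Fin n) (Fin n) ℂ →ₗ[ℂ] Matrix (Fin m) (Fin m) ℂ)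
    (p q : Fin n × Fin m) :
    Choi Φ p q = Φ (Matrix.single p.1 q.1 1) p.2 q.2 := by
  simp [Choi, Matrix.sum_apply, Matrix.single_apply, ite_and]

theorem Choi_sum {n m : ℕ} {ι : Type*} (t : Finset ι)
    (Φ : ι → Matrix (Fin n) (Fin n) ℂ →ₗ[ℂ] Matrix (Fin m) (Fin m) ℂ) :
    Choi (∑ i ∈ t, Φ i) = ∑ i ∈ t, Choi (Φ i) := by
  ext p q
  simp [Choi_apply, Matrix.sum_apply]

/-- Conjugating the output of `Φ` by `K` conjugates the Choi matrix by `1 ⊗ K`. -/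
theorem Choi_sandwich_comp {n m m' : ℕ}
    (Φ : Matrix (Fin n) (Fin n) ℂ →ₗ[ℂ] Matrix (Fin m) (Fin m) ℂ)
    (K : Matrix (Fin m') (Fin m) ℂ) :
    Choi (sandwich K ∘ₗ Φ) =
      ((1 : Matrix (Fin n) (Fin n) ℂ) ⊗ₖ K) * Choi Φ *
        ((1 : Matrix (Fin n) (Fin n) ℂ) ⊗ₖ K)ᴴ := by
  simp [Choi, Matrix.mul_sum, Matrix.sum_mul, conjTranspose_kronecker, ← mul_kronecker_mul,
    sandwich_apply]

/-- Conjugating a matrix unit by `L`, expanded in matrix units. -/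
theorem sandwich_single {n n' : ℕ} (L : Matrix (Fin n) (Fin n') ℂ) (p q : Fin n') :
    sandwich L (Matrix.single p q 1) =
      ∑ j, ∑ k, (L j p * star (L k q)) • Matrix.single j k (1 : ℂ) := by
  ext j k
  simp [sandwich_apply, Matrix.sum_apply, Matrix.mul_apply, Matrix.single_apply, ite_and]

/-- Conjugating the input of `Φ` by `L` conjugates the Choi matrix by `Lᵀ ⊗ 1`. -/
theorem Choi_comp_sandwich {n n' m : ℕ}
    (Φ : Matrix (Fin n) (Fin n) ℂ →ₗ[ℂ] Matrix (Fin m) (Fin m) ℂ)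
    (L : Matrix (Fin n) (Fin n') ℂ) :
    Choi (Φ ∘ₗ sandwich L) =
      (Lᵀ ⊗ₖ (1 : Matrix (Fin m) (Fin m) ℂ)) * Choi Φ *
        (Lᵀ ⊗ₖ (1 : Matrix (Fin m) (Fin m) ℂ))ᴴ := by
  have key (j k : Fin n) (p q : Fin n') :
      (Lᵀ * Matrix.single j k (1 : ℂ) * Lᵀᴴ) p q = L j p * star (L k q) := by
    simp [Matrix.mul_apply, Matrix.single_apply, ite_and]
  ext p q
  simp only [Choi_apply, LinearMap.comp_apply, sandwich_single, map_sum, map_smul]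
  simp only [Choi, Matrix.mul_sum, Matrix.sum_mul, conjTranspose_kronecker, ← mul_kronecker_mul,
    conjTranspose_one, Matrix.one_mul, Matrix.mul_one, Matrix.sum_apply, kroneckerMap_apply, key,
    Matrix.smul_apply, smul_eq_mul]

/-- `C(Ψ_K ∘ Φ ∘ Ψ_L) = ∑_{a,b} (L_bᵀ ⊗ K_a) C(Φ) (L_bᵀ ⊗ K_a)†`. -/
theorem choi_of_comp (m m' n n' : ℕ) (hm : 0 < m) (hm' : 0 < m') (hn : 0 < n) (hn' : 0 < n')
    (Φ : Matrix (Fin n) (Fin n) ℂ →ₗ[ℂ] Matrix (Fin m) (Fin m) ℂ)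
    (r s : ℕ) (K : Fin r → Matrix (Fin m') (Fin m) ℂ) (L : Fin s → Matrix (Fin n) (Fin n') ℂ) :
    Choi ((∑ a, sandwich (K a)) ∘ₗ Φ ∘ₗ (∑ b, sandwich (L b))) =
      ∑ a, ∑ b, ((L b)ᵀ ⊗ₖ K a) * Choi Φ * ((L b)ᵀ ⊗ₖ K a)ᴴ := by
  have expand : (∑ a, sandwich (K a)) ∘ₗ Φ ∘ₗ (∑ b, sandwich (L b)) =
      ∑ a, ∑ b, sandwich (K a) ∘ₗ (Φ ∘ₗ sandwich (L b)) := by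
    ext1 ρ
    simp [LinearMap.sum_apply]
  rw [expand]
  simp only [Choi_sum, Choi_sandwich_comp, Choi_comp_sandwich]
  refine Finset.sum_congr rfl fun a _ => Finset.sum_congr rfl fun b _ => ?_
  have split : (L b)ᵀ ⊗ₖ K a =
      ((1 : Matrix (Fin n') (Fin n') ℂ) ⊗ₖ K a) *
        ((L b)ᵀ ⊗ₖ (1 : Matrix (Fin m) (Fin m) ℂ)) := by
    rw [← mul_kronecker_mul, Matrix.one_mul, Matrix.mul_one]
  rw [split, conjTranspose_mul]
  simp only [Matrix.mul_assoc]

end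
end

section
/- Let x, y ∈ ℂⁿ be linearly independent unit vectors, let x⊥ be any unit vector in span{x,y} orthogonal to x, and let λ ∈ [0,1). Then Ψ_{λ,x,y} is bijective, and its inverse is the map ρ ↦ K_λ^{-1} ρ K_λ^{-1} − L̂_λ ρ L̂_λ†, where L̂_λ := (√λ ⟨x,y⟩ / √((1−λ)(1−λ|⟨x⊥,y⟩|²))) x x† + (√λ ⟨x⊥,y⟩ / √(1−λ|⟨x⊥,y⟩|²)) x⊥ x†. -/
open Matrix Kronecker
open scoped ComplexOrder

noncomputable section

/-- The operator `L̂_λ` appearing in the inverse of `Ψ_{λ,x,y}`. -/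
def Lhat {n : ℕ} (lam : ℝ) (x y xp : Fin n → ℂ) : Matrix (Fin n) (Fin n) ℂ :=
  (((Real.sqrt lam : ℂ) * (star x ⬝ᵥ y)) /
      ((Real.sqrt ((1 - lam) * (1 - lam * ‖star xp ⬝ᵥ y‖ ^ 2)) : ℝ) : ℂ)) •
    Matrix.vecMulVec x (star x) +
  (((Real.sqrt lam : ℂ) * (star xp ⬝ᵥ y)) /
      ((Real.sqrt (1 - lam * ‖star xp ⬝ᵥ y‖ ^ 2) : ℝ) : ℂ)) •
    Matrix.vecMulVec xp (star x)

/-- Conjugation by a rank-one matrix `u x†`. -/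
lemma vecMulVec_mul_mul_conjTranspose {n : ℕ} (u x : Fin n → ℂ) (ρ : Matrix (Fin n) (Fin n) ℂ) :
    vecMulVec u (star x) * ρ * (vecMulVec u (star x))ᴴ =
      (star x ⬝ᵥ ρ *ᵥ x) • vecMulVec u (star u) := by
  rw [conjTranspose_vecMulVec, star_star, vecMulVec_mul, vecMulVec_mul_vecMulVec,
    ← dotProduct_mulVec]
  ext i j
  simp [vecMulVec_apply]
  ring

lemma Kmat_isHermitian {n : ℕ} (lam : ℝ) (x : Fin n → ℂ) : (Kmat lam x)ᴴ = Kmat lam x := by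
  simp [Kmat, conjTranspose_vecMulVec]

lemma Kmat_mulVec_self {n : ℕ} (lam : ℝ) {x : Fin n → ℂ} (hx : star x ⬝ᵥ x = 1) :
    Kmat lam x *ᵥ x = (Real.sqrt (1 - lam) : ℂ) • x := by
  simp [Kmat, sub_mulVec, smul_mulVec, vecMulVec_mulVec, hx, sub_smul]

lemma Kmat_mulVec_of_orthogonal {n : ℕ} (lam : ℝ) {x z : Fin n → ℂ} (hz : star x ⬝ᵥ z = 0) :
    Kmat lam x *ᵥ z = z := by
  simp [Kmat, sub_mulVec, smul_mulVec, vecMulVec_mulVec, hz]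

lemma isUnit_det_Kmat {n : ℕ} {lam : ℝ} (hlam : lam < 1) {x : Fin n → ℂ}
    (hx : star x ⬝ᵥ x = 1) : IsUnit (Kmat lam x).det := by
  have hs : (Real.sqrt (1 - lam) : ℂ) ≠ 0 := by
    exact_mod_cast (Real.sqrt_pos.2 (sub_pos.2 hlam)).ne'
  have h : Kmat lam x *
      (1 + ((Real.sqrt (1 - lam) : ℂ)⁻¹ - 1) • vecMulVec x (star x)) = 1 := by
    rw [mul_add, mul_one, mul_smul_comm, mul_vecMulVec, Kmat_mulVec_self lam hx, smul_vecMulVec,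
      smul_smul, sub_mul, inv_mul_cancel₀ hs, one_mul, Kmat]
    simp
  exact (isUnit_iff_isUnit_det _).1 (IsUnit.of_mul_eq_one _ h)

/-- Expansion of `y` in an orthonormal basis `x, z` of `span {x, y}`. -/
lemma eq_add_of_mem_span_pair {n : ℕ} {x y z : Fin n → ℂ}
    (hx : star x ⬝ᵥ x = 1) (hz : star z ⬝ᵥ z = 1) (hxz : star x ⬝ᵥ z = 0)
    (hmem : z ∈ Submodule.span ℂ {x, y}) :
    y = (star x ⬝ᵥ y) • x + (star z ⬝ᵥ y) • z := by
  have hzx : star z ⬝ᵥ x = 0 := by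
    rw [← star_star x, star_dotProduct_star, hxz, star_zero]
  obtain ⟨p, q, rfl⟩ := Submodule.mem_span_pair.1 hmem
  have hq : q ≠ 0 := by
    rintro rfl
    simp only [zero_smul, add_zero, dotProduct_smul, hx, smul_eq_mul, mul_one] at hxz
    simp [hxz] at hz
  set z := p • x + q • y with hzdef
  have hy : y = (-(q⁻¹ * p)) • x + q⁻¹ • z := by
    rw [hzdef, smul_add, smul_smul, smul_smul, inv_mul_cancel₀ hq]
    module
  have h₁ : star x ⬝ᵥ y = -(q⁻¹ * p) := by
    rw [hy]
    simp [hx, hxz]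
  have h₂ : star z ⬝ᵥ y = q⁻¹ := by
    rw [hy]
    simp [hzx, hz]
  rw [h₁, h₂, ← hy]

/-- Pythagoras for a unit vector expanded in an orthonormal pair. -/
lemma norm_sq_add_norm_sq_eq_one {n : ℕ} {x y z : Fin n → ℂ} (hy : star y ⬝ᵥ y = 1)
    (hexp : y = (star x ⬝ᵥ y) • x + (star z ⬝ᵥ y) • z) :
    ‖star x ⬝ᵥ y‖ ^ 2 + ‖star z ⬝ᵥ y‖ ^ 2 = 1 := by
  have h (w : Fin n → ℂ) : star y ⬝ᵥ w = star (star w ⬝ᵥ y) := by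
    rw [star_dotProduct]
  have h₁ : star y ⬝ᵥ y =
      (star x ⬝ᵥ y) * star (star x ⬝ᵥ y) + (star z ⬝ᵥ y) * star (star z ⬝ᵥ y) := by
    conv_lhs => rw [hexp, dotProduct_add, dotProduct_smul, dotProduct_smul, ← hexp, h x, h z]
    rfl
  rw [hy] at h₁
  simp only [Complex.star_def, Complex.mul_conj'] at h₁
  exact_mod_cast h₁.symm

/-- `L̂_λ` is a rescaling of `K_λ⁻¹ y x†`. -/
lemma Lhat_eq {n : ℕ} {lam : ℝ} (hlam : lam < 1) {x y z : Fin n → ℂ}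
    (hx : star x ⬝ᵥ x = 1) (hxz : star x ⬝ᵥ z = 0)
    (hexp : y = (star x ⬝ᵥ y) • x + (star z ⬝ᵥ y) • z) :
    Lhat lam x y z =
      ((Real.sqrt lam / Real.sqrt (1 - lam * ‖star z ⬝ᵥ y‖ ^ 2) : ℝ) : ℂ) •
        vecMulVec ((Kmat lam x)⁻¹ *ᵥ y) (star x) := by
  have hs : (Real.sqrt (1 - lam) : ℂ) ≠ 0 := by
    exact_mod_cast (Real.sqrt_pos.2 (sub_pos.2 hlam)).ne'
  have hdet := isUnit_det_Kmat hlam hx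
  have hKy : (Kmat lam x)⁻¹ *ᵥ y =
      ((star x ⬝ᵥ y) / (Real.sqrt (1 - lam) : ℂ)) • x + (star z ⬝ᵥ y) • z := by
    have h : Kmat lam x *ᵥ
        (((star x ⬝ᵥ y) / (Real.sqrt (1 - lam) : ℂ)) • x + (star z ⬝ᵥ y) • z) = y := by
      rw [mulVec_add, mulVec_smul, mulVec_smul, Kmat_mulVec_self lam hx,
        Kmat_mulVec_of_orthogonal lam hxz, smul_smul, div_mul_cancel₀ _ hs, ← hexp]
    conv_lhs => rw [← h]
    rw [mulVec_mulVec, nonsing_inv_mul _ hdet, one_mulVec]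
  rw [hKy, Lhat, Real.sqrt_mul (sub_pos.2 hlam).le, add_vecMulVec, smul_vecMulVec, smul_vecMulVec,
    smul_add, smul_smul, smul_smul]
  push_cast
  congr 2 <;> ring

lemma Psi_apply {n : ℕ} {lam : ℝ} (h0 : 0 ≤ lam) (x y : Fin n → ℂ)
    (ρ : Matrix (Fin n) (Fin n) ℂ) :
    Psi lam x y ρ = Kmat lam x * ρ * Kmat lam x +
      ((lam : ℂ) * (star x ⬝ᵥ ρ *ᵥ x)) • vecMulVec y (star y) := by
  have hsq : (Real.sqrt lam : ℂ) * Real.sqrt lam = lam := by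
    exact_mod_cast Real.mul_self_sqrt h0
  change Kmat lam x * ρ * (Kmat lam x)ᴴ + Lmat lam x y * ρ * (Lmat lam x y)ᴴ = _
  rw [Kmat_isHermitian, Lmat, conjTranspose_smul, smul_mul_assoc, smul_mul_smul_comm,
    vecMulVec_mul_mul_conjTranspose, smul_smul, Complex.star_def, Complex.conj_ofReal, hsq]

lemma star_dotProduct_Psi_mulVec {n : ℕ} {lam : ℝ} (h0 : 0 ≤ lam) (h1 : lam ≤ 1)
    {x : Fin n → ℂ} (hx : star x ⬝ᵥ x = 1) (y : Fin n → ℂ) (ρ : Matrix (Fin n) (Fin n) ℂ) :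
    star x ⬝ᵥ Psi lam x y ρ *ᵥ x =
      ((1 - lam + lam * ‖star x ⬝ᵥ y‖ ^ 2 : ℝ) : ℂ) * (star x ⬝ᵥ ρ *ᵥ x) := by
  have hsq : (Real.sqrt (1 - lam) : ℂ) * Real.sqrt (1 - lam) = 1 - lam := by
    exact_mod_cast Real.mul_self_sqrt (sub_nonneg.2 h1)
  have hxK : star x ᵥ* Kmat lam x = (Real.sqrt (1 - lam) : ℂ) • star x := by
    have h := congrArg star (Kmat_mulVec_self lam hx)
    rwa [star_mulVec, Kmat_isHermitian, star_smul, Complex.star_def,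
      Complex.conj_ofReal] at h
  have hyx : (star x ⬝ᵥ y) * (star y ⬝ᵥ x) = ((‖star x ⬝ᵥ y‖ ^ 2 : ℝ) : ℂ) := by
    have h : star y ⬝ᵥ x = star (star x ⬝ᵥ y) := by rw [star_dotProduct]
    rw [h, Complex.star_def, Complex.mul_conj']
    push_cast
    rfl
  have hK : star x ⬝ᵥ (Kmat lam x * ρ * Kmat lam x) *ᵥ x = (1 - lam) * (star x ⬝ᵥ ρ *ᵥ x) := by
    rw [← mulVec_mulVec, Kmat_mulVec_self lam hx, ← mulVec_mulVec, dotProduct_mulVec, hxK,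
      mulVec_smul, dotProduct_smul, smul_dotProduct, smul_eq_mul, smul_eq_mul, ← mul_assoc, hsq]
  have hL : star x ⬝ᵥ vecMulVec y (star y) *ᵥ x = ((‖star x ⬝ᵥ y‖ ^ 2 : ℝ) : ℂ) := by
    rw [← hyx]
    simp [vecMulVec_mulVec, mul_comm]
  rw [Psi_apply h0, add_mulVec, dotProduct_add, hK, smul_mulVec, dotProduct_smul, hL, smul_eq_mul]
  push_cast
  ring

lemma inverse_apply_Psi {n : ℕ} {lam : ℝ} (h0 : 0 ≤ lam) (h1 : lam < 1) {x y z : Fin n → ℂ}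
    (hx : star x ⬝ᵥ x = 1) (hxz : star x ⬝ᵥ z = 0)
    (hexp : y = (star x ⬝ᵥ y) • x + (star z ⬝ᵥ y) • z)
    (hnorm : ‖star x ⬝ᵥ y‖ ^ 2 + ‖star z ⬝ᵥ y‖ ^ 2 = 1) (ρ : Matrix (Fin n) (Fin n) ℂ) :
    (Kmat lam x)⁻¹ * Psi lam x y ρ * (Kmat lam x)⁻¹ -
      Lhat lam x y z * Psi lam x y ρ * (Lhat lam x y z)ᴴ = ρ := by
  have hdet := isUnit_det_Kmat h1 hx
  have hpos : 0 < 1 - lam * ‖star z ⬝ᵥ y‖ ^ 2 := by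
    nlinarith [sq_nonneg ‖star x ⬝ᵥ y‖]
  have hK : (Kmat lam x)⁻¹ * Psi lam x y ρ * (Kmat lam x)⁻¹ = ρ +
      ((lam : ℂ) * (star x ⬝ᵥ ρ *ᵥ x)) •
        vecMulVec ((Kmat lam x)⁻¹ *ᵥ y) (star ((Kmat lam x)⁻¹ *ᵥ y)) := by
    rw [Psi_apply h0, mul_add, add_mul, mul_assoc (Kmat lam x) ρ,
      nonsing_inv_mul_cancel_left _ _ hdet, mul_nonsing_inv_cancel_right _ _ hdet,
      mul_smul_comm, smul_mul_assoc, mul_vecMulVec, vecMulVec_mul, star_mulVec, conjTranspose_nonsing_inv, Kmat_isHermitian]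
  have hcoef : ((Real.sqrt lam / Real.sqrt (1 - lam * ‖star z ⬝ᵥ y‖ ^ 2) : ℝ) : ℂ) *
      ((Real.sqrt lam / Real.sqrt (1 - lam * ‖star z ⬝ᵥ y‖ ^ 2) : ℝ) : ℂ) *
      ((1 - lam + lam * ‖star x ⬝ᵥ y‖ ^ 2 : ℝ) : ℂ) = lam := by
    rw [← Complex.ofReal_mul, ← Complex.ofReal_mul, div_mul_div_comm, Real.mul_self_sqrt h0,
      Real.mul_self_sqrt hpos.le, show 1 - lam + lam * ‖star x ⬝ᵥ y‖ ^ 2 =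
        1 - lam * ‖star z ⬝ᵥ y‖ ^ 2 by linear_combination lam * hnorm, div_mul_cancel₀ _ hpos.ne']
  rw [hK, Lhat_eq h1 hx hxz hexp, conjTranspose_smul, smul_mul_assoc, smul_mul_smul_comm,
    vecMulVec_mul_mul_conjTranspose, smul_smul, Complex.star_def, Complex.conj_ofReal,
    star_dotProduct_Psi_mulVec h0 h1.le hx, ← mul_assoc, hcoef, add_sub_cancel_right]

/-- for `λ ∈ [0,1)`, `Ψ_{λ,x,y}` is bijective with inverse
`ρ ↦ K_λ⁻¹ ρ K_λ⁻¹ - L̂_λ ρ L̂_λ†`. -/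
theorem Psi_bijective_inverse (n : ℕ) (x y xp : Fin n → ℂ)
    (hind : LinearIndependent ℂ ![x, y])
    (hx : star x ⬝ᵥ x = 1) (hy : star y ⬝ᵥ y = 1)
    (hxp_mem : xp ∈ Submodule.span ℂ {x, y}) (hxp : star xp ⬝ᵥ xp = 1)
    (horth : star x ⬝ᵥ xp = 0)
    (lam : ℝ) (hlam : lam ∈ Set.Ico (0 : ℝ) 1) :
    Function.Bijective (Psi lam x y) ∧
      Function.LeftInverse
        (fun ρ => (Kmat lam x)⁻¹ * ρ * (Kmat lam x)⁻¹ - Lhat lam x y xp * ρ * (Lhat lam x y xp)ᴴ)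
        (Psi lam x y) ∧
      Function.RightInverse
        (fun ρ => (Kmat lam x)⁻¹ * ρ * (Kmat lam x)⁻¹ - Lhat lam x y xp * ρ * (Lhat lam x y xp)ᴴ)
        (Psi lam x y) := by
  obtain ⟨h0, h1⟩ := hlam
  have hexp := eq_add_of_mem_span_pair hx hxp horth hxp_mem
  have hnorm := norm_sq_add_norm_sq_eq_one hy hexp
  have hleft : Function.LeftInverse
      (fun ρ => (Kmat lam x)⁻¹ * ρ * (Kmat lam x)⁻¹ - Lhat lam x y xp * ρ * (Lhat lam x y xp)ᴴ)
      (Psi lam x y) := by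
    intro ρ
    exact inverse_apply_Psi h0 h1 hx horth hexp hnorm ρ
  have hsurj := LinearMap.injective_iff_surjective.1 hleft.injective
  exact ⟨⟨hleft.injective, hsurj⟩, hleft, hleft.rightInverse_of_surjective hsurj⟩

end
end

section
/- Let x, y ∈ ℂⁿ be orthogonal unit vectors (⟨x,y⟩ = 0). Then for all λ, μ ∈ [0,1] one has Ψ_{λ,x,y} ∘ Ψ_{μ,x,y} = Ψ_{λ+μ−λμ, x, y}; in particular Ψ_{λ,x,y} and Ψ_{μ,x,y} commute. -/
open Matrix Kronecker
open scoped ComplexOrder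

noncomputable section

theorem sandwich_comp_sandwich {l m n : ℕ} (A : Matrix (Fin l) (Fin m) ℂ)
    (B : Matrix (Fin m) (Fin n) ℂ) : sandwich A ∘ₗ sandwich B = sandwich (A * B) := by
  ext1 ρ
  simp only [LinearMap.comp_apply, sandwich_apply, conjTranspose_mul, Matrix.mul_assoc]

theorem sandwich_ofReal_smul {m n : ℕ} (c : ℝ) (A : Matrix (Fin m) (Fin n) ℂ) :
    sandwich ((c : ℂ) • A) = ((c ^ 2 : ℝ) : ℂ) • sandwich A := by
  ext1 ρ
  simp only [sandwich_apply, LinearMap.smul_apply, conjTranspose_smul, Matrix.smul_mul,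
    Matrix.mul_smul, smul_smul, RCLike.star_def, Complex.conj_ofReal, sq, Complex.ofReal_mul]

theorem Psi_eq {n : ℕ} {lam : ℝ} (hlam : 0 ≤ lam) (x y : Fin n → ℂ) :
    Psi lam x y = sandwich (Kmat lam x) + (lam : ℂ) • sandwich (vecMulVec y (star x)) := by
  rw [Psi, Lmat, sandwich_ofReal_smul, Real.sq_sqrt hlam]

theorem Kmat_mul_Kmat {n : ℕ} {x : Fin n → ℂ} (hx : star x ⬝ᵥ x = 1) {lam : ℝ} (hlam : lam ≤ 1)
    (mu : ℝ) : Kmat lam x * Kmat mu x = Kmat (lam + mu - lam * mu) x := by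
  have hsqrt : √(1 - (lam + mu - lam * mu)) = √(1 - lam) * √(1 - mu) := by
    rw [← Real.sqrt_mul (sub_nonneg.2 hlam)]
    ring_nf
  have hproj : vecMulVec x (star x) * vecMulVec x (star x) = vecMulVec x (star x) := by
    rw [vecMulVec_mul_vecMulVec, hx, one_smul]
  simp only [Kmat, hsqrt, sub_mul, mul_sub, Matrix.smul_mul, Matrix.mul_smul, hproj, one_mul,
    mul_one]
  push_cast
  module

theorem Kmat_mul_vecMulVec {n : ℕ} {x y : Fin n → ℂ} (hxy : star x ⬝ᵥ y = 0) (lam : ℝ) :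
    Kmat lam x * vecMulVec y (star x) = vecMulVec y (star x) := by
  simp [Kmat, sub_mul, vecMulVec_mul_vecMulVec, hxy]

theorem vecMulVec_mul_Kmat {n : ℕ} {x : Fin n → ℂ} (hx : star x ⬝ᵥ x = 1) (y : Fin n → ℂ)
    (mu : ℝ) : vecMulVec y (star x) * Kmat mu x = (√(1 - mu) : ℂ) • vecMulVec y (star x) := by
  simp only [Kmat, mul_sub, Matrix.mul_smul, vecMulVec_mul_vecMulVec, hx, one_smul, mul_one]
  push_cast
  module

/-- The composition law `Ψ_λ ∘ Ψ_μ = Ψ_{λ+μ-λμ}`; the vector `y` need not be normalized. -/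
theorem Psi_comp_Psi_eq_Psi {n : ℕ} {x y : Fin n → ℂ} (hx : star x ⬝ᵥ x = 1)
    (hxy : star x ⬝ᵥ y = 0) {lam mu : ℝ} (hlam : lam ∈ Set.Icc (0 : ℝ) 1)
    (hmu : mu ∈ Set.Icc (0 : ℝ) 1) :
    Psi lam x y ∘ₗ Psi mu x y = Psi (lam + mu - lam * mu) x y := by
  have hnu : 0 ≤ lam + mu - lam * mu := by nlinarith [hlam.1, hlam.2, hmu.1]
  have hnil : vecMulVec y (star x) * vecMulVec y (star x) = 0 := by
    simp [vecMulVec_mul_vecMulVec, hxy]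
  have hzero : sandwich (0 : Matrix (Fin n) (Fin n) ℂ) = 0 := by
    ext1 ρ
    simp [sandwich_apply]
  rw [Psi_eq hlam.1, Psi_eq hmu.1, Psi_eq hnu]
  simp only [LinearMap.add_comp, LinearMap.comp_add, LinearMap.smul_comp, LinearMap.comp_smul,
    sandwich_comp_sandwich, Kmat_mul_Kmat hx hlam.2, Kmat_mul_vecMulVec hxy,
    vecMulVec_mul_Kmat hx, hnil, hzero, sandwich_ofReal_smul, Real.sq_sqrt (sub_nonneg.2 hmu.2)]
  push_cast
  module

/-- for orthogonal unit vectors `x ⊥ y`,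
`Ψ_{λ,x,y} ∘ Ψ_{μ,x,y} = Ψ_{λ+μ-λμ,x,y}`; in particular they commute. -/
theorem Psi_comp_Psi (n : ℕ) (x y : Fin n → ℂ)
    (hx : star x ⬝ᵥ x = 1) (hy : star y ⬝ᵥ y = 1) (hxy : star x ⬝ᵥ y = 0)
    (lam mu : ℝ) (hlam : lam ∈ Set.Icc (0 : ℝ) 1) (hmu : mu ∈ Set.Icc (0 : ℝ) 1) :
    Psi lam x y ∘ₗ Psi mu x y = Psi (lam + mu - lam * mu) x y ∧
      Psi lam x y ∘ₗ Psi mu x y = Psi mu x y ∘ₗ Psi lam x y := by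
  refine ⟨Psi_comp_Psi_eq_Psi hx hxy hlam hmu, ?_⟩
  rw [Psi_comp_Psi_eq_Psi hx hxy hlam hmu, Psi_comp_Psi_eq_Psi hx hxy hmu hlam]
  ring_nf

end
end

section
/- Let Φ be a quantum channel on n×n complex matrices with Kraus operators {K_j}, and let x, x⊥ ∈ ℂⁿ be orthogonal unit vectors such that Φ(x⊥ x⊥†) Z x = 0 and Φ(x x†) Z x = 0 for every n×n matrix Z in the Hilbert–Schmidt orthogonal complement K_Φ^⊥ of span{K_j}. Then there exists λ ∈ (0,1) such that Φ ∘ Ψ_{λ,x,x⊥}^{-1} is completely positive (and hence Φ = (Φ ∘ Ψ_{λ,x,x⊥}^{-1}) ∘ Ψ_{λ,x,x⊥} is a factorization into quantum channels). -/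
open Matrix Kronecker
open scoped ComplexOrder

noncomputable section

theorem exists_norm_le_of_ker_le {V E F : Type*} [AddCommGroup V] [Module ℂ V]
    [NormedAddCommGroup E] [NormedSpace ℂ E] [FiniteDimensional ℂ E]
    [NormedAddCommGroup F] [NormedSpace ℂ F]
    (A : V →ₗ[ℂ] E) (B : V →ₗ[ℂ] F) (h : A.ker ≤ B.ker) :
    ∃ C : ℝ, 0 ≤ C ∧ ∀ v, ‖B v‖ ≤ C * ‖A v‖ := by
  obtain ⟨G, hG⟩ := LinearMap.exists_extend
    ((A.ker.liftQ B h) ∘ₗ A.quotKerEquivRange.symm.toLinearMap)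
  refine ⟨‖LinearMap.toContinuousLinearMap G‖, norm_nonneg _, fun v => ?_⟩
  have hv : B v = LinearMap.toContinuousLinearMap G (A v) := by
    have := LinearMap.congr_fun hG ⟨A v, A.mem_range_self v⟩
    simp at this
    simp [this]
  rw [hv]
  exact ContinuousLinearMap.le_opNorm _ _

theorem trace_conjTranspose_mul_vecMulVec_mul {n : ℕ} (K Z : Matrix (Fin n) (Fin n) ℂ)
    (x y : Fin n → ℂ) :
    ((K * vecMulVec y (star x))ᴴ * Z).trace = star (K *ᵥ y) ⬝ᵥ (Z *ᵥ x) := by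
  rw [mul_vecMulVec, conjTranspose_vecMulVec, star_star, vecMulVec_mul, trace_vecMulVec,
    dotProduct_mulVec, dotProduct_comm]

theorem choi_apply {n : ℕ} (Φ : Matrix (Fin n) (Fin n) ℂ →ₗ[ℂ] Matrix (Fin n) (Fin n) ℂ)
    (p q : Fin n × Fin n) :
    Choi Φ p q = Φ (Matrix.single p.1 q.1 (1 : ℂ)) p.2 q.2 := by
  simp only [Choi, Matrix.sum_apply, kroneckerMap_apply]
  rw [Finset.sum_eq_single p.1, Finset.sum_eq_single q.1]
  all_goals simp +contextual [Matrix.single_apply]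

theorem choi_sandwich {n : ℕ} (A : Matrix (Fin n) (Fin n) ℂ) :
    Choi (sandwich A) = vecMulVec (_root_.vec A) (star (_root_.vec A)) := by
  ext p q
  simp [choi_apply, vecMulVec_apply, sandwich, sandwich₂, _root_.vec, Matrix.mul_apply,
    Matrix.single_apply, ite_and]

theorem star_vec_dotProduct {n : ℕ} (A : Matrix (Fin n) (Fin n) ℂ) (w : Fin n × Fin n → ℂ) :
    star (_root_.vec A) ⬝ᵥ w = (Aᴴ * Matrix.of fun i j => w (j, i)).trace := by
  simp [dotProduct, Fintype.sum_prod_type, _root_.vec, Matrix.trace, Matrix.mul_apply]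

theorem star_dotProduct_vecMulVec_mulVec {ι : Type*} [Fintype ι] (u w : ι → ℂ) :
    star w ⬝ᵥ (vecMulVec u (star u) *ᵥ w) = ((‖star u ⬝ᵥ w‖ ^ 2 : ℝ) : ℂ) := by
  have hconj : star w ⬝ᵥ u = star (star u ⬝ᵥ w) := by rw [star_dotProduct]
  rw [vecMulVec_mulVec, dotProduct_smul, hconj, Complex.ofReal_pow, ← Complex.conj_mul']
  rfl

/-- A difference of sums of rank-one projections is positive semidefinite as soon as the
corresponding quadratic forms are ordered. -/
theorem posSemidef_sum_vecMulVec_sub {ι κ : Type*} [Fintype ι] [Fintype κ]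
    (u v : κ → ι → ℂ) (μ : ℝ)
    (h : ∀ w : ι → ℂ, μ * ∑ j, ‖star (v j) ⬝ᵥ w‖ ^ 2 ≤ ∑ j, ‖star (u j) ⬝ᵥ w‖ ^ 2) :
    (∑ j, vecMulVec (u j) (star (u j)) -
      (μ : ℂ) • ∑ j, vecMulVec (v j) (star (v j))).PosSemidef := by
  have key (u : κ → ι → ℂ) (w : ι → ℂ) :
      star w ⬝ᵥ ((∑ j, vecMulVec (u j) (star (u j))) *ᵥ w) =
        ((∑ j, ‖star (u j) ⬝ᵥ w‖ ^ 2 : ℝ) : ℂ) := by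
    rw [Matrix.sum_mulVec, dotProduct_sum, Complex.ofReal_sum]
    exact Finset.sum_congr rfl fun j _ => star_dotProduct_vecMulVec_mulVec (u j) w
  have herm (u : κ → ι → ℂ) : (∑ j, vecMulVec (u j) (star (u j))).IsHermitian := by
    simp [Matrix.IsHermitian, conjTranspose_sum, conjTranspose_vecMulVec]
  refine .of_dotProduct_mulVec_nonneg ?_ fun w => ?_
  · refine (herm u).sub ?_
    simp [Matrix.IsHermitian, conjTranspose_smul, (herm v).eq]
  · rw [sub_mulVec, smul_mulVec, dotProduct_sub, dotProduct_smul, key, key, smul_eq_mul,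
      ← Complex.ofReal_mul, ← Complex.ofReal_sub, Complex.zero_le_real]
    exact sub_nonneg.2 (h w)

theorem Kmat_mul {n : ℕ} (lam : ℝ) (h : lam < 1) (x : Fin n → ℂ) (hx : star x ⬝ᵥ x = 1) :
    Kmat lam x * (1 + (((Real.sqrt (1 - lam))⁻¹ - 1 : ℝ) : ℂ) • vecMulVec x (star x)) = 1 := by
  have hs : ((Real.sqrt (1 - lam) : ℝ) : ℂ) ≠ 0 := by
    exact_mod_cast (Real.sqrt_pos.2 (by linarith)).ne'
  have hP : vecMulVec x (star x) * vecMulVec x (star x) = vecMulVec x (star x) := by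
    rw [vecMulVec_mul_vecMulVec, hx, one_smul]
  simp only [Kmat, sub_mul, mul_add, one_mul, mul_one, smul_mul_assoc, mul_smul_comm, hP]
  push_cast
  match_scalars
  · ring
  · field_simp
    ring

theorem Kmat_inv {n : ℕ} (lam : ℝ) (h : lam < 1) (x : Fin n → ℂ) (hx : star x ⬝ᵥ x = 1) :
    (Kmat lam x)⁻¹ = 1 + (((Real.sqrt (1 - lam))⁻¹ - 1 : ℝ) : ℂ) • vecMulVec x (star x) :=
  Matrix.inv_eq_right_inv (Kmat_mul lam h x hx)

theorem PsiInv_comp_Psi {n : ℕ} (lam : ℝ) (h : lam < 1) (x xp : Fin n → ℂ)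
    (hx : star x ⬝ᵥ x = 1) (horth : star x ⬝ᵥ xp = 0) :
    PsiInv lam x xp ∘ₗ Psi lam x xp = LinearMap.id := by
  have hKK : (Kmat lam x)⁻¹ * Kmat lam x = 1 := by
    rw [Kmat_inv lam h x hx]
    exact mul_eq_one_comm.1 (Kmat_mul lam h x hx)
  have hKL : (Kmat lam x)⁻¹ * Lmat lam x xp = Lmat lam x xp := by
    rw [Kmat_inv lam h x hx]
    simp [Lmat, add_mul, vecMulVec_mul_vecMulVec, horth]
  have hLL : Lmat lam x xp * Lmat lam x xp = 0 := by
    simp [Lmat, vecMulVec_mul_vecMulVec, horth]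
  have hLK : Lmat lam x xp * Kmat lam x = (Real.sqrt (1 - lam) : ℂ) • Lmat lam x xp := by
    simp only [Lmat, Kmat, mul_sub, mul_one, smul_mul_assoc, mul_smul_comm,
      vecMulVec_mul_vecMulVec, hx, one_smul, smul_smul]
    push_cast
    match_scalars
    ring
  have hsq : (Real.sqrt (1 - lam) : ℂ) * Real.sqrt (1 - lam) = 1 - lam := by
    exact_mod_cast Real.mul_self_sqrt (by linarith : (0 : ℝ) ≤ 1 - lam)
  have hne : (1 - lam : ℂ) ≠ 0 := by
    exact_mod_cast (by linarith : (0 : ℝ) < 1 - lam).ne'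
  have comp (A B ρ : Matrix (Fin n) (Fin n) ℂ) :
      A * (B * ρ * Bᴴ) * Aᴴ = (A * B) * ρ * (A * B)ᴴ := by
    simp only [conjTranspose_mul, mul_assoc]
  ext1 ρ
  simp only [PsiInv, Psi, sandwich, sandwich₂, LinearMap.comp_apply, LinearMap.sub_apply,
    LinearMap.add_apply, LinearMap.smul_apply, LinearMap.coe_mk, AddHom.coe_mk, mul_add, add_mul,
    comp, hKK, hKL, hLL, hLK, LinearMap.id_apply]
  simp only [conjTranspose_smul, smul_mul_assoc, mul_smul_comm, smul_smul, RCLike.star_def,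
    Complex.conj_ofReal, hsq]
  push_cast
  simp [smul_smul, hne]

theorem isCP_comp_PsiInv {n r : ℕ} (K : Fin r → Matrix (Fin n) (Fin n) ℂ)
    (Φ : Matrix (Fin n) (Fin n) ℂ →ₗ[ℂ] Matrix (Fin n) (Fin n) ℂ)
    (hKraus : ∀ ρ, Φ ρ = ∑ j, K j * ρ * (K j)ᴴ) (x xp : Fin n → ℂ) (lam : ℝ) (h0 : 0 ≤ lam)
    (h : ∀ W : Matrix (Fin n) (Fin n) ℂ,
      (1 - lam)⁻¹ * lam * ∑ j, ‖((K j * vecMulVec xp (star x))ᴴ * W).trace‖ ^ 2 ≤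
        ∑ j, ‖((K j * (Kmat lam x)⁻¹)ᴴ * W).trace‖ ^ 2) :
    IsCP (Φ ∘ₗ PsiInv lam x xp) := by
  have hsq : (Real.sqrt lam : ℂ) * Real.sqrt lam = lam := by
    exact_mod_cast Real.mul_self_sqrt h0
  have hdecomp : Choi (Φ ∘ₗ PsiInv lam x xp) =
      ∑ j, Choi (sandwich (K j * (Kmat lam x)⁻¹)) -
        (((1 - lam)⁻¹ * lam : ℝ) : ℂ) •
          ∑ j, Choi (sandwich (K j * vecMulVec xp (star x))) := by
    ext p q
    simp only [Matrix.sub_apply, Matrix.sum_apply, Matrix.smul_apply, choi_apply,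
      LinearMap.comp_apply, PsiInv, LinearMap.sub_apply, LinearMap.smul_apply,
      hKraus, sandwich, sandwich₂, LinearMap.coe_mk, AddHom.coe_mk, Lmat, conjTranspose_smul,
      smul_mul_assoc, mul_smul_comm, smul_smul, conjTranspose_mul, mul_assoc,
      RCLike.star_def, Complex.conj_ofReal, hsq, Finset.smul_sum, Complex.ofReal_mul, sub_mul,
      mul_sub, Finset.sum_sub_distrib]
  rw [IsCP, hdecomp]
  simp only [choi_sandwich]
  refine posSemidef_sum_vecMulVec_sub _ _ _ fun w => ?_
  simp only [star_vec_dotProduct]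
  exact h _

/-- The map `W ↦ (⟨Mⱼ, W⟩)ⱼ` of Hilbert–Schmidt inner products. -/
def hsPairing {n r : ℕ} (M : Fin r → Matrix (Fin n) (Fin n) ℂ) :
    Matrix (Fin n) (Fin n) ℂ →ₗ[ℂ] EuclideanSpace ℂ (Fin r) where
  toFun W := WithLp.toLp 2 fun j => ((M j)ᴴ * W).trace
  map_add' X Y := by ext j; simp [mul_add]
  map_smul' c X := by ext j; simp

theorem norm_sq_hsPairing {n r : ℕ} (M : Fin r → Matrix (Fin n) (Fin n) ℂ)
    (W : Matrix (Fin n) (Fin n) ℂ) :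
    ‖hsPairing M W‖ ^ 2 = ∑ j, ‖((M j)ᴴ * W).trace‖ ^ 2 := by
  rw [EuclideanSpace.norm_sq_eq]
  rfl

theorem hsPairing_eq_zero_of_mulVec_eq_zero {n r : ℕ} (K : Fin r → Matrix (Fin n) (Fin n) ℂ)
    (x y : Fin n → ℂ) (Z : Matrix (Fin n) (Fin n) ℂ)
    (h : ((∑ j, K j * vecMulVec y (star y) * (K j)ᴴ) * Z) *ᵥ x = 0) :
    hsPairing (fun j => K j * vecMulVec y (star x)) Z = 0 := by
  rw [← norm_eq_zero, ← sq_eq_zero_iff, norm_sq_hsPairing]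
  simp only [trace_conjTranspose_mul_vecMulVec_mul]
  have hv := congrArg (star (Z *ᵥ x) ⬝ᵥ ·) h
  rw [← mulVec_mulVec] at hv
  simp only [Matrix.sum_mulVec, dotProduct_sum, dotProduct_zero] at hv
  have hterm (j : Fin r) : star (Z *ᵥ x) ⬝ᵥ
      ((K j * vecMulVec y (star y) * (K j)ᴴ) *ᵥ (Z *ᵥ x)) =
        ((‖star (K j *ᵥ y) ⬝ᵥ (Z *ᵥ x)‖ ^ 2 : ℝ) : ℂ) := by
    rw [mul_vecMulVec, vecMulVec_mul, ← star_mulVec, star_dotProduct_vecMulVec_mulVec]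
  simp only [hterm] at hv
  exact_mod_cast hv

theorem exists_small_parameter (b d : ℝ) :
    ∃ lam ∈ Set.Ioo (0 : ℝ) 1, ((Real.sqrt (1 - lam))⁻¹ - 1) * b ≤ 1 / 2 ∧
      (1 - lam)⁻¹ * lam * d ^ 2 ≤ 1 / 4 := by
  have h₁ : Filter.Tendsto (fun lam : ℝ => ((Real.sqrt (1 - lam))⁻¹ - 1) * b)
      (nhdsWithin 0 (Set.Ioi 0)) (nhds 0) := by
    have : ContinuousAt (fun lam : ℝ => ((Real.sqrt (1 - lam))⁻¹ - 1) * b) 0 := by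
      fun_prop (disch := simp)
    simpa using this.tendsto.mono_left nhdsWithin_le_nhds
  have h₂ : Filter.Tendsto (fun lam : ℝ => (1 - lam)⁻¹ * lam * d ^ 2)
      (nhdsWithin 0 (Set.Ioi 0)) (nhds 0) := by
    have : ContinuousAt (fun lam : ℝ => (1 - lam)⁻¹ * lam * d ^ 2) 0 := by
      fun_prop (disch := simp)
    simpa using this.tendsto.mono_left nhdsWithin_le_nhds
  obtain ⟨lam, hmem, h₁, h₂⟩ := (Filter.Eventually.and (Ioo_mem_nhdsGT (zero_lt_one' ℝ))
    ((h₁.eventually_le_const (by norm_num : (0 : ℝ) < 1 / 2)).and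
      (h₂.eventually_le_const (by norm_num : (0 : ℝ) < 1 / 4)))).exists
  exact ⟨lam, hmem, h₁, h₂⟩

/-- sufficient criterion, explicit form. -/
theorem sufficient_criterion (n r : ℕ) (K : Fin r → Matrix (Fin n) (Fin n) ℂ)
    (Φ : Matrix (Fin n) (Fin n) ℂ →ₗ[ℂ] Matrix (Fin n) (Fin n) ℂ)
    (hKraus : ∀ ρ, Φ ρ = ∑ j, K j * ρ * (K j)ᴴ) (hΦ : IsChannel Φ)
    (x xp : Fin n → ℂ)
    (hx : star x ⬝ᵥ x = 1) (hxp : star xp ⬝ᵥ xp = 1) (horth : star x ⬝ᵥ xp = 0)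
    (hcond : ∀ Z : Matrix (Fin n) (Fin n) ℂ, (∀ j, ((K j)ᴴ * Z).trace = 0) →
      (Φ (Matrix.vecMulVec xp (star xp)) * Z) *ᵥ x = 0 ∧
      (Φ (Matrix.vecMulVec x (star x)) * Z) *ᵥ x = 0) :
    ∃ lam ∈ Set.Ioo (0 : ℝ) 1, IsCP (Φ ∘ₗ PsiInv lam x xp) ∧
      Φ = (Φ ∘ₗ PsiInv lam x xp) ∘ₗ Psi lam x xp := by
  set A := hsPairing K with hA
  set B := hsPairing (fun j => K j * vecMulVec x (star x)) with hB
  set D := hsPairing (fun j => K j * vecMulVec xp (star x)) with hD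
  have hZ (Z) (hZ : Z ∈ A.ker) : D Z = 0 ∧ B Z = 0 := by
    have hc := hcond Z fun j => congrFun (congrArg WithLp.ofLp (LinearMap.mem_ker.1 hZ)) j
    simp only [hKraus] at hc
    exact ⟨hsPairing_eq_zero_of_mulVec_eq_zero K x xp Z hc.1,
      hsPairing_eq_zero_of_mulVec_eq_zero K x x Z hc.2⟩
  obtain ⟨b, -, hb⟩ := exists_norm_le_of_ker_le A B fun Z h => (hZ Z h).2
  obtain ⟨d, -, hd⟩ := exists_norm_le_of_ker_le A D fun Z h => (hZ Z h).1
  obtain ⟨lam, ⟨h0, h1⟩, hlb, hld⟩ := exists_small_parameter b d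
  refine ⟨lam, ⟨h0, h1⟩, isCP_comp_PsiInv K Φ hKraus x xp lam h0.le fun W => ?_, ?_⟩
  · set c : ℝ := (Real.sqrt (1 - lam))⁻¹ - 1 with hc
    have hc0 : 0 ≤ c := sub_nonneg.2 <| (one_le_inv₀ (Real.sqrt_pos.2 (by linarith))).2
      (Real.sqrt_le_one.2 (by linarith))
    have hsum : hsPairing (fun j => K j * (Kmat lam x)⁻¹) W = A W + (c : ℂ) • B W := by
      ext j
      simp [hA, hB, hsPairing, Kmat_inv lam h1 x hx, mul_add, add_mul, ← hc]
    rw [← norm_sq_hsPairing, ← norm_sq_hsPairing, ← hD, hsum]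
    have hlower : 1 / 2 * ‖A W‖ ≤ ‖A W + (c : ℂ) • B W‖ := by
      have hle : ‖A W‖ - ‖(c : ℂ) • B W‖ ≤ ‖A W + (c : ℂ) • B W‖ := by
        simpa using norm_sub_norm_le (A W) (-((c : ℂ) • B W))
      have hcB : ‖(c : ℂ) • B W‖ ≤ 1 / 2 * ‖A W‖ := by
        rw [norm_smul, Complex.norm_of_nonneg hc0]
        calc c * ‖B W‖ ≤ c * (b * ‖A W‖) := by gcongr; exact hb W
          _ = c * b * ‖A W‖ := by ring
          _ ≤ 1 / 2 * ‖A W‖ := by gcongr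
      linarith
    have hμ : 0 ≤ (1 - lam)⁻¹ * lam := mul_nonneg (inv_nonneg.2 (by linarith)) h0.le
    calc (1 - lam)⁻¹ * lam * ‖D W‖ ^ 2 ≤ (1 - lam)⁻¹ * lam * (d * ‖A W‖) ^ 2 := by
          gcongr; exact hd W
      _ = (1 - lam)⁻¹ * lam * d ^ 2 * ‖A W‖ ^ 2 := by ring
      _ ≤ 1 / 4 * ‖A W‖ ^ 2 := by gcongr
      _ = (1 / 2 * ‖A W‖) ^ 2 := by ring
      _ ≤ ‖A W + (c : ℂ) • B W‖ ^ 2 := by gcongr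
  · rw [LinearMap.comp_assoc, PsiInv_comp_Psi lam h1 x xp hx horth, LinearMap.comp_id]

end
end
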